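/- Let A : X → Y be bounded linear (X Banach, Y Hilbert), R convex, x† satisfy the source condition ξ = A*w ∈ ∂R(x†), and x_α minimise (1/2)‖Ax − y‖² + αR(x) where y = Ax†. Then D_ξ(x_α, x†) ≤ (‖w‖²/2)·α and ‖Ax_α − y‖ ≤ 2‖w‖·α. -/

import Mathlib

open RealInnerProductSpace

/-- Under the source condition `ξ = A* w ∈ ∂R(x†)`, the exact-data Tikhonov
minimiser `x_α` satisfies `D_ξ(x_α, x†) ≤ (‖w‖²/2) α` and
`‖A x_α - y‖ ≤ 2 ‖w‖ α`, where `y = A x†`. -/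
theorem stmt_11 {X Y : Type*} [NormedAddCommGroup X] [NormedSpace ℝ X]
    [NormedAddCommGroup Y] [InnerProductSpace ℝ Y] [CompleteSpace Y]
    (A : X →L[ℝ] Y) (R : X → ℝ) (hR : ConvexOn ℝ Set.univ R)
    (α : ℝ) (hα : 0 < α) (xdag : X) (w : Y)
    -- source condition: `u ↦ ⟪w, A u⟫` is a subgradient of `R` at `x†`
    (hsrc : ∀ u : X, R xdag + ⟪w, A (u - xdag)⟫ ≤ R u)
    (xα : X)
    (hmin : ∀ x : X, (1 / 2) * ‖A xα - A xdag‖ ^ 2 + α * R xα ≤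
      (1 / 2) * ‖A x - A xdag‖ ^ 2 + α * R x) :
    R xα - R xdag - ⟪w, A (xα - xdag)⟫ ≤ (‖w‖ ^ 2 / 2) * α ∧
    ‖A xα - A xdag‖ ≤ 2 * ‖w‖ * α := by 
  have h1 := hmin xdag
  have h2 := hsrc xα
  have h3 := (abs_le.mp (abs_real_inner_le_norm w (A (xα - xdag)))).1
  rw [← map_sub] at h1 ⊢
  simp only [sub_self, norm_zero] at h1
  have hn := norm_nonneg (A (xα - xdag))
  have hw := norm_nonneg w
  generalize ‖A (xα - xdag)‖ = n at *
  generalize ⟪w, A (xα - xdag)⟫ = i at *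
  generalize ‖w‖ = m at *
  have h4 : α * (-(m * n)) ≤ α * i := mul_le_mul_of_nonneg_left h3 hα.le
  have h5 : α * (R xdag + i) ≤ α * R xα := mul_le_mul_of_nonneg_left h2 hα.le
  constructor
  · refine le_of_mul_le_mul_left ?_ hα
    nlinarith [sq_nonneg (n - α * m)]
  · rcases hn.eq_or_lt with h | h
    · rw [← h]; positivity
    · refine le_of_mul_le_mul_left ?_ h
      nlinarith
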